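/- arXiv:1811.04308 — 2 statements merged into one kernel-verified Lean document; each statement's English description precedes it below -/
import Mathlib

section
/- For every point ζ on the unit circle 𝕋 there exists a function f ∈ H², f not identically zero, such that the set {Q_n(1/f)(ζ) : n ∈ ℕ} of values at ζ of the optimal polynomial approximants of 1/f is dense in ℂ. -/
/-!
The function is found by a Baire category argument. Work in the closure `X`, inside `H²`, of the
polynomials that are invertible in the Wiener-type algebra of multipliers (`InvPoly`); this is a
complete metric space. For each nonempty open `B ⊆ ℂ` consider the set of nonzero `f ∈ X` such
that `Q_n(1/f)(ζ) ∈ B` for some `n`. If all these sets, for `B` in a countable basis of `ℂ`, are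
open and dense in `X`, then any point of their intersection has the required property.

*Openness.* For `f ≠ 0` the coefficients of `Q_n(1/f)` solve the normal equations, whose Gram
operator is invertible and depends continuously on `f`; hence so does `Q_n(1/f)(ζ)`
(`continuousAt_opa_eval`).

*Density.* If `p` is an invertible polynomial then `Q_n(1/p)(ζ)` comes arbitrarily close to
`1 / p(ζ)` (`exists_opa_eval_mem`). So it suffices to move the value `p(ζ)` to any prescribed
nonzero number by a small `H²` perturbation that keeps `p` invertible (`exists_perturb`). This is
done by repeatedly multiplying `p` by `1 + (d - 1) u`, where `|d - 1| < 1` and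
`u = (1/m) ∑_{j<m} (ζ̄ z)ʲ` satisfies `u(ζ) = 1`, has multiplier norm at most `1`, and has `H²`
norm `m^{-1/2}`.
-/

open MeasureTheory Filter Metric Polynomial

noncomputable section

/-- The Hardy space `H²`, modelled as the space `ℓ²(ℕ, ℂ)` of square-summable
Taylor-coefficient sequences: `f : H2` represents the holomorphic function
`z ↦ ∑ₖ f k * z ^ k` on the unit disc, and the `lp`-norm of `f` is its `H²` norm. -/
abbrev H2 := lp (fun _ : ℕ => ℂ) 2

/-- Value at `z` of the holomorphic function with Taylor coefficients `f`. -/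
def h2Val (f : H2) (z : ℂ) : ℂ := ∑' k, f k * z ^ k

/-- `n`-th Taylor coefficient of the product of a polynomial `q` with the power series
having coefficients `a`. -/
def coeffMul (q : Polynomial ℂ) (a : ℕ → ℂ) (n : ℕ) : ℂ :=
  ∑ j ∈ Finset.range (n + 1), q.coeff j * a (n - j)

/-- Taylor coefficients of `q·f − 1`. -/
def errSeq (q : Polynomial ℂ) (f : H2) (n : ℕ) : ℂ :=
  coeffMul q (fun k => f k) n - if n = 0 then 1 else 0

/-- The `H²` norm `‖q·f − 1‖_{H²}`. -/
def h2ErrNorm (q : Polynomial ℂ) (f : H2) : ℝ :=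
  Real.sqrt (∑' n, ‖errSeq q f n‖ ^ 2)

/-- `Q` is an optimal polynomial approximant of order `n` of `1/f`: it has degree at
most `n` and minimizes `‖q·f − 1‖_{H²}` over all polynomials `q` of degree at most `n`. -/
def IsOpa (n : ℕ) (f : H2) (Q : Polynomial ℂ) : Prop :=
  Q.degree ≤ (n : WithBot ℕ) ∧
    ∀ q : Polynomial ℂ, q.degree ≤ (n : WithBot ℕ) → h2ErrNorm Q f ≤ h2ErrNorm q f

open Classical in
/-- The optimal polynomial approximant `Q_n(1/f)` (well defined whenever the minimizer
exists and is unique, which is the case for every `f ≠ 0`). -/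
def opa (n : ℕ) (f : H2) : Polynomial ℂ :=
  if h : ∃! Q : Polynomial ℂ, IsOpa n f Q then h.choose else 0

/-- Sup-distance of two functions over a set `E` (the distance in `C(E)`). -/
def supDist (E : Set ℂ) (u v : ℂ → ℂ) : ℝ := ⨆ z : E, ‖u z - v z‖

/-- `f` has universal optimal polynomial approximants on `E`: every continuous function
on `E` is the uniform limit on `E` of a subsequence of the sequence `Q_n(1/f)`. -/
def HasUniversalOpa (E : Set ℂ) (f : H2) : Prop :=
  ∀ g : ℂ → ℂ, ContinuousOn g E →
    ∃ m : ℕ → ℕ, StrictMono m ∧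
      TendstoUniformlyOn (fun s z => (opa (m s) f).eval z) g atTop E

/-- `E ⊆ 𝕋` has arc-length (Lebesgue) measure zero. -/
def circleNull (E : Set ℂ) : Prop :=
  volume {θ : ℝ | Complex.exp (θ * Complex.I) ∈ E} = 0

/-! ### Multiplication by polynomials on `H²` -/

/-- The shift `f ↦ z f` on `H²`, as a linear isometry. -/
def shift : H2 →ₗᵢ[ℂ] H2 where
  toFun f := ⟨fun n => Nat.casesOn n 0 f, by
    have h : Summable fun n => ‖f n‖ ^ (2 : ENNReal).toReal :=
      (memℓp_gen_iff (by norm_num)).1 f.2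
    refine (memℓp_gen_iff (E := fun _ : ℕ => ℂ) (p := 2) (by norm_num)).2 ?_
    rw [← summable_nat_add_iff 1]
    exact h⟩
  map_add' f g := by
    ext n
    cases n with
    | zero => exact (add_zero (0 : ℂ)).symm
    | succ n => rfl
  map_smul' c f := by
    ext n
    cases n <;> simp
  norm_map' f := by
    have hs : Summable fun n => ‖f n‖ ^ (2 : ENNReal).toReal :=
      (memℓp_gen_iff (by norm_num)).1 f.2
    rw [lp.norm_eq_tsum_rpow (by norm_num), lp.norm_eq_tsum_rpow (by norm_num)]
    congr 1
    rw [Summable.tsum_eq_zero_add]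
    · simp
    · rw [← summable_nat_add_iff 1]
      exact hs

lemma shift_zero (f : H2) : shift f 0 = 0 := rfl

lemma shift_succ (f : H2) (n : ℕ) : shift f (n + 1) = f n := rfl

/-- The functional calculus of the shift: `mulOp q` is multiplication by `q` on `H²`. Being an
algebra homomorphism into bounded operators, it makes `‖mulOp q‖` a submultiplicative norm
on polynomials. -/
def mulOp : ℂ[X] →ₐ[ℂ] (H2 →L[ℂ] H2) := aeval shift.toContinuousLinearMap

/-- The constant function `1` of `H²`. -/
def oneH : H2 := lp.single 2 0 1

lemma oneH_apply (n : ℕ) : oneH n = if n = 0 then 1 else 0 := by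
  simp [oneH, lp.single_apply, Pi.single_apply]

lemma norm_oneH : ‖oneH‖ = 1 := by
  simp [oneH, lp.norm_single]

instance : Nontrivial H2 :=
  ⟨oneH, 0, fun h => by simpa [h] using norm_oneH⟩

lemma shift_pow_apply (j n : ℕ) (f : H2) :
    (shift.toContinuousLinearMap ^ j) f n = if j ≤ n then f (n - j) else 0 := by
  induction j generalizing n with
  | zero => simp
  | succ j ih =>
    rw [pow_succ', mul_apply_eq_comp]
    cases n with
    | zero => simp [shift_zero]
    | succ n =>
      have := shift_succ ((shift.toContinuousLinearMap ^ j) f) n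
      simp only [LinearIsometry.coe_toContinuousLinearMap, this, ih]
      simp

lemma norm_shift_pow_le (j : ℕ) : ‖shift.toContinuousLinearMap ^ j‖ ≤ 1 := by
  refine (norm_pow_le _ j).trans (pow_le_one₀ (norm_nonneg _) ?_)
  exact shift.norm_toContinuousLinearMap_le

lemma mulOp_apply (q : ℂ[X]) (f : H2) (n : ℕ) :
    mulOp q f n = coeffMul q (fun k => f k) n := by
  have h1 : mulOp q f n = ∑ j ∈ q.support, if j ≤ n then q.coeff j * f (n - j) else 0 := by
    simp only [mulOp, aeval_def, eval₂_eq_sum, Polynomial.sum]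
    rw [_root_.sum_apply, lp.coeFn_sum, Finset.sum_apply]
    refine Finset.sum_congr rfl fun j _ => ?_
    rw [← Algebra.smul_def, _root_.smul_apply, lp.coeFn_smul, Pi.smul_apply,
      shift_pow_apply]
    simp
  rw [h1, coeffMul, ← Finset.sum_filter]
  refine Finset.sum_subset_zero_on_sdiff ?_ ?_ fun _ _ => rfl
  · intro j hj
    simp only [Finset.mem_filter] at hj
    simp
    omega
  · intro j hj
    simp only [Finset.mem_sdiff, Finset.mem_range, Finset.mem_filter, mem_support_iff] at hj
    have : q.coeff j = 0 := by
      by_contra h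
      exact hj.2 ⟨h, by omega⟩
    simp [this]

lemma h2ErrNorm_eq (q : ℂ[X]) (f : H2) : h2ErrNorm q f = ‖mulOp q f - oneH‖ := by
  rw [lp.norm_eq_tsum_rpow (by norm_num), h2ErrNorm, Real.sqrt_eq_rpow]
  congr 1
  · refine tsum_congr fun n => ?_
    rw [lp.coeFn_sub, Pi.sub_apply, mulOp_apply, oneH_apply, errSeq]
    norm_num

/-- Multiplication by a nonzero `f` is injective on polynomials, because formal power series
form a domain. -/
lemma mulOp_eq_zero {q : ℂ[X]} {f : H2} (hf : f ≠ 0) (h : mulOp q f = 0) : q = 0 := by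
  have h2 : (q : PowerSeries ℂ) * PowerSeries.mk (fun k => f k) = 0 := by
    ext n
    have := mulOp_apply q f n
    rw [h] at this
    rw [PowerSeries.coeff_mul, Finset.Nat.sum_antidiagonal_eq_sum_range_succ_mk]
    simpa [coeffMul] using this.symm
  rcases mul_eq_zero.1 h2 with h3 | h3
  · exact_mod_cast h3
  · refine absurd ?_ hf
    ext n
    have := congrArg (PowerSeries.coeff n) h3
    simpa using this

lemma mulOp_oneH_apply (q : ℂ[X]) (n : ℕ) : mulOp q oneH n = q.coeff n := by
  rw [mulOp_apply, coeffMul, Finset.sum_eq_single_of_mem n (by simp)]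
  · simp [oneH_apply]
  · intro j hj hne
    have : n - j ≠ 0 := by
      simp at hj
      omega
    simp [oneH_apply, this]

/-- Evaluation on the circle is bounded in `H²` norm, up to a factor linear in the degree. -/
lemma norm_eval_le (q : ℂ[X]) (N : ℕ) (hN : q.natDegree ≤ N) {ζ : ℂ} (hζ : ‖ζ‖ = 1) :
    ‖q.eval ζ‖ ≤ (N + 1) * ‖mulOp q oneH‖ := by
  rw [eval_eq_sum_range' (Nat.lt_succ_of_le hN)]
  calc _ ≤ ∑ i ∈ Finset.range (N + 1), ‖mulOp q oneH‖ := by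
        refine norm_sum_le_of_le _ fun i _ => ?_
        rw [norm_mul, norm_pow, hζ, one_pow, mul_one, ← mulOp_oneH_apply]
        exact lp.norm_apply_le_norm (by norm_num) _ _
    _ = _ := by simp

/-! ### Optimal polynomial approximants at a nonzero function -/

/-- The map sending a coefficient vector `c` to `(∑ᵢ cᵢ zⁱ) f`. -/
def synth (n : ℕ) (f : H2) : EuclideanSpace ℂ (Fin (n + 1)) →L[ℂ] H2 :=
  ∑ i : Fin (n + 1), (EuclideanSpace.proj i : EuclideanSpace ℂ (Fin (n + 1)) →L[ℂ] ℂ).smulRight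
    ((shift.toContinuousLinearMap ^ (i : ℕ)) f)

/-- The polynomial with coefficient vector `c`. -/
def vecPoly {n : ℕ} (c : EuclideanSpace ℂ (Fin (n + 1))) : ℂ[X] :=
  ∑ i : Fin (n + 1), monomial (i : ℕ) (c i)

lemma synth_apply (n : ℕ) (f : H2) (c : EuclideanSpace ℂ (Fin (n + 1))) :
    synth n f c = mulOp (vecPoly c) f := by
  simp only [synth, vecPoly, map_sum, _root_.sum_apply]
  refine Finset.sum_congr rfl fun i _ => ?_
  rw [mulOp, aeval_monomial, ← Algebra.smul_def]
  rfl

lemma degree_vecPoly_le {n : ℕ} (c : EuclideanSpace ℂ (Fin (n + 1))) :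
    (vecPoly c).degree ≤ n := by
  refine (degree_sum_le _ _).trans (Finset.sup_le fun i _ => ?_)
  refine (degree_monomial_le _ _).trans ?_
  exact_mod_cast Nat.le_of_lt_succ i.2

lemma coeff_vecPoly {n : ℕ} (c : EuclideanSpace ℂ (Fin (n + 1))) (i : Fin (n + 1)) :
    (vecPoly c).coeff i = c i := by
  simp [vecPoly, coeff_monomial, Fin.val_inj]

lemma exists_vecPoly {n : ℕ} {q : ℂ[X]} (hq : q.degree ≤ n) :
    ∃ c : EuclideanSpace ℂ (Fin (n + 1)), vecPoly c = q := by
  refine ⟨WithLp.toLp 2 fun i => q.coeff i, ?_⟩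
  rw [vecPoly, Fin.sum_univ_eq_sum_range (fun i => monomial i (q.coeff i))]
  exact (as_sum_range' q _ (Nat.lt_succ_of_le (natDegree_le_of_degree_le hq))).symm

lemma synth_injective {f : H2} (hf : f ≠ 0) (n : ℕ) : Function.Injective (synth n f) := by
  rw [injective_iff_map_eq_zero]
  intro c hc
  rw [synth_apply] at hc
  ext i
  rw [← coeff_vecPoly, mulOp_eq_zero hf hc]
  simp

lemma continuous_synth (n : ℕ) : Continuous (synth n) := by
  refine continuous_finsetSum _ fun i _ => ?_
  exact ((ContinuousLinearMap.smulRightL ℂ (EuclideanSpace ℂ (Fin (n + 1))) H2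
    (EuclideanSpace.proj i)).continuous).comp (ContinuousLinearMap.continuous _)

/-- The Gram operator of `f, z f, …, zⁿ f`. -/
def gram (n : ℕ) (f : H2) : EuclideanSpace ℂ (Fin (n + 1)) →L[ℂ] EuclideanSpace ℂ (Fin (n + 1)) :=
  (synth n f).adjoint ∘L synth n f

/-- The solution of the normal equations for approximating `1` by `q f`, `deg q ≤ n`. -/
def optVec (n : ℕ) (f : H2) : EuclideanSpace ℂ (Fin (n + 1)) :=
  Ring.inverse (gram n f) ((synth n f).adjoint oneH)

lemma isUnit_gram {f : H2} (hf : f ≠ 0) (n : ℕ) : IsUnit (gram n f) := by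
  have hinj : Function.Injective (gram n f) := by
    rw [injective_iff_map_eq_zero]
    intro c hc
    refine synth_injective hf n ?_
    rw [map_zero, ← inner_self_eq_zero (𝕜 := ℂ), ← ContinuousLinearMap.adjoint_inner_right]
    change inner ℂ c (gram n f c) = 0
    rw [hc, inner_zero_right]
  rw [ContinuousLinearMap.isUnit_iff_bijective]
  exact ⟨hinj, LinearMap.injective_iff_surjective (f := (gram n f).toLinearMap) |>.1 hinj⟩

lemma gram_optVec {f : H2} (hf : f ≠ 0) (n : ℕ) :
    gram n f (optVec n f) = (synth n f).adjoint oneH := by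
  rw [optVec, ← mul_apply_eq_comp, Ring.mul_inverse_cancel _ (isUnit_gram hf n)]
  rfl

/-- Pythagoras: the error at the solution of the normal equations is orthogonal to all `q f`. -/
lemma norm_sq_synth_sub {f : H2} (hf : f ≠ 0) (n : ℕ) (c : EuclideanSpace ℂ (Fin (n + 1))) :
    ‖synth n f c - oneH‖ ^ 2 =
      ‖synth n f (c - optVec n f)‖ ^ 2 + ‖synth n f (optVec n f) - oneH‖ ^ 2 := by
  have h : inner ℂ (synth n f (c - optVec n f)) (synth n f (optVec n f) - oneH) = 0 := by
    rw [← ContinuousLinearMap.adjoint_inner_right, map_sub, ← gram_optVec hf]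
    change inner ℂ _ (gram n f _ - gram n f _) = 0
    rw [sub_self, inner_zero_right]
  have := norm_add_sq_eq_norm_sq_add_norm_sq_of_inner_eq_zero _ _ h
  rw [map_sub, sub_add_sub_cancel] at this
  rw [map_sub, sq, this, sq, sq]

lemma isOpa_iff {f : H2} (hf : f ≠ 0) (n : ℕ) (Q : ℂ[X]) :
    IsOpa n f Q ↔ Q = vecPoly (optVec n f) := by
  constructor
  · rintro ⟨hd, hQ⟩
    obtain ⟨c, rfl⟩ := exists_vecPoly hd
    have h := hQ _ (degree_vecPoly_le (optVec n f))
    rw [h2ErrNorm_eq, h2ErrNorm_eq, ← synth_apply, ← synth_apply] at h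
    have h2 := norm_sq_synth_sub hf n c
    have h3 : ‖synth n f (c - optVec n f)‖ ^ 2 ≤ 0 := by
      have := pow_le_pow_left₀ (norm_nonneg _) h 2
      linarith
    have h4 : synth n f (c - optVec n f) = 0 := by
      rw [← norm_eq_zero]
      nlinarith [norm_nonneg (synth n f (c - optVec n f))]
    have h5 := synth_injective hf n (h4.trans (map_zero _).symm)
    rw [sub_eq_zero.1 h5]
  · rintro rfl
    refine ⟨degree_vecPoly_le _, fun q hq => ?_⟩
    obtain ⟨c, rfl⟩ := exists_vecPoly hq
    rw [h2ErrNorm_eq, h2ErrNorm_eq, ← synth_apply, ← synth_apply]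
    have h2 := norm_sq_synth_sub hf n c
    refine le_of_sq_le_sq ?_ (norm_nonneg _)
    nlinarith [sq_nonneg ‖synth n f (c - optVec n f)‖]

lemma opa_eq {f : H2} (hf : f ≠ 0) (n : ℕ) : opa n f = vecPoly (optVec n f) := by
  have h : ∃! Q : ℂ[X], IsOpa n f Q :=
    ⟨_, (isOpa_iff hf n _).2 rfl, fun Q hQ => (isOpa_iff hf n Q).1 hQ⟩
  rw [opa, dif_pos h]
  exact (isOpa_iff hf n _).1 h.choose_spec.1

/-- The approximant depends continuously on `f ≠ 0`, since `optVec` is given by inverting the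
Gram operator, which is a unit depending continuously on `f`. -/
lemma continuousAt_opa_eval {f : H2} (hf : f ≠ 0) (n : ℕ) (ζ : ℂ) :
    ContinuousAt (fun g : H2 => (opa n g).eval ζ) f := by
  have hadj : Continuous fun g : H2 => (synth n g).adjoint :=
    ContinuousLinearMap.adjoint.continuous.comp (continuous_synth n)
  have hg : Continuous (gram n) := hadj.clm_comp (continuous_synth n)
  have hinv : ContinuousAt (fun g => Ring.inverse (gram n g)) f := by
    obtain ⟨u, hu⟩ := isUnit_gram hf n
    have := NormedRing.inverse_continuousAt u
    rw [hu] at this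
    exact ContinuousAt.comp (f := gram n) this hg.continuousAt
  have hopt : ContinuousAt (optVec n) f :=
    hinv.clm_apply (hadj.clm_apply continuous_const).continuousAt
  have hev : Continuous fun c : EuclideanSpace ℂ (Fin (n + 1)) => (vecPoly c).eval ζ := by
    simp only [vecPoly, eval_finsetSum, eval_monomial]
    fun_prop
  refine (hev.continuousAt.comp hopt).congr ?_
  filter_upwards [isOpen_ne.mem_nhds hf] with g hg
  simp [opa_eq hg]


/-! ### Polynomials that are invertible in the Wiener algebra -/

/-- The polynomials `p` with `p(ζ) ≠ 0` that have an approximate polynomial inverse for the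
multiplier norm; the second condition forces `p` to have no zero in the closed disc. -/
def InvPoly (ζ : ℂ) : Set ℂ[X] :=
  {p | p.eval ζ ≠ 0 ∧ ∃ s : ℂ[X], ‖mulOp (1 - s * p)‖ < 1}

lemma mulOp_oneH_ne_zero {p : ℂ[X]} (hp : p ≠ 0) : mulOp p oneH ≠ 0 := by
  have h1 : oneH ≠ 0 := fun h => by simpa [h] using norm_oneH
  exact fun h => hp (mulOp_eq_zero h1 h)

lemma norm_mulOp_apply_le_mul (p q : ℂ[X]) (f : H2) :
    ‖mulOp (p * q) f‖ ≤ ‖mulOp p‖ * ‖mulOp q f‖ := by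
  rw [map_mul, mul_apply_eq_comp]
  exact ContinuousLinearMap.le_opNorm _ _

lemma norm_mulOp_oneH_le (p : ℂ[X]) : ‖mulOp p oneH‖ ≤ ‖mulOp p‖ := by
  simpa [norm_oneH] using (mulOp p).le_opNorm oneH

lemma norm_mulOp_pow_le (p : ℂ[X]) (k : ℕ) : ‖mulOp (p ^ k)‖ ≤ ‖mulOp p‖ ^ k := by
  rw [map_pow]
  exact norm_pow_le _ k

/-- For `p ∈ InvPoly ζ` the values at `ζ` of the approximants of `1 / p` accumulate at
`1 / p(ζ)`: a truncated Neumann series `q` makes `‖q p - 1‖` geometrically small, hence so is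
the error of the optimal approximant, and point evaluation on the circle costs only a factor
linear in the degree. -/
lemma exists_opa_eval_mem {ζ : ℂ} (hζ : ‖ζ‖ = 1) {p : ℂ[X]} (hp : p ∈ InvPoly ζ) {B : Set ℂ}
    (hB : IsOpen B) (hpB : (p.eval ζ)⁻¹ ∈ B) :
    ∃ n, (opa n (mulOp p oneH)).eval ζ ∈ B := by
  obtain ⟨hpζ, s, hs⟩ := hp
  set ρ := ‖mulOp (1 - s * p)‖ with hρ
  have hp0 : p ≠ 0 := by
    rintro rfl
    simp at hpζ
  have hF := mulOp_oneH_ne_zero hp0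
  set F := mulOp p oneH with hFdef
  set m := s.natDegree + p.natDegree with hm
  have key : ∀ K : ℕ, ‖(opa ((K + 1) * m) F).eval ζ * p.eval ζ - 1‖ ≤
      ((K + 2) * m + 1) * ρ ^ K := by
    intro K
    have hopa := (isOpa_iff hF ((K + 1) * m) _).2 (opa_eq hF _)
    set Q := opa ((K + 1) * m) F
    set q := s * ∑ i ∈ Finset.range K, (1 - s * p) ^ i with hq
    have hx : (1 - s * p).natDegree ≤ m := by
      refine (natDegree_sub_le _ _).trans ?_
      simpa using natDegree_mul_le (p := s) (q := p)
    have hqdeg : q.natDegree ≤ (K + 1) * m := by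
      have h1 : (∑ i ∈ Finset.range K, (1 - s * p) ^ i).natDegree ≤ K * m := by
        refine natDegree_sum_le_of_forall_le _ _ fun i hi => ?_
        refine natDegree_pow_le.trans ?_
        exact Nat.mul_le_mul (Finset.mem_range.1 hi).le hx
      refine natDegree_mul_le.trans ?_
      have : (K + 1) * m = m + K * m := by ring
      omega
    have hqp : q * p - 1 = -(1 - s * p) ^ K := by
      have := geom_sum_mul (1 - s * p) K
      linear_combination -this
    have herr : ‖mulOp (Q * p - 1) oneH‖ ≤ ρ ^ K := by
      have h1 := hopa.2 q (degree_le_of_natDegree_le hqdeg)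
      have h2 : ∀ r : ℂ[X], h2ErrNorm r F = ‖mulOp (r * p - 1) oneH‖ := by
        intro r
        rw [h2ErrNorm_eq, hFdef, map_sub, map_mul, map_one]
        rfl
      rw [h2, h2, hqp] at h1
      refine h1.trans ((norm_mulOp_oneH_le _).trans ?_)
      rw [map_neg, norm_neg]
      exact norm_mulOp_pow_le _ _
    have hdeg : (Q * p - 1).natDegree ≤ (K + 2) * m := by
      refine (natDegree_sub_le _ _).trans ?_
      rw [natDegree_one, max_eq_left (Nat.zero_le _)]
      refine natDegree_mul_le.trans ?_
      have h1 := natDegree_le_of_degree_le hopa.1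
      have : (K + 2) * m = (K + 1) * m + m := by ring
      omega
    have h := norm_eval_le (Q * p - 1) _ hdeg hζ
    rw [eval_sub, eval_mul, eval_one] at h
    refine h.trans ?_
    push_cast
    gcongr
  have hlim : Tendsto (fun K : ℕ => ((K + 2) * m + 1) * ρ ^ K) atTop (nhds 0) := by
    have h1 := tendsto_self_mul_const_pow_of_lt_one (norm_nonneg _) hs
    have h2 := tendsto_pow_atTop_nhds_zero_of_lt_one (norm_nonneg _) hs
    have h3 := (h1.const_mul (m : ℝ)).add (h2.const_mul (2 * m + 1 : ℝ))
    simp only [mul_zero, add_zero] at h3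
    refine h3.congr fun K => ?_
    rw [← hρ]
    ring
  have h1 : Tendsto (fun K : ℕ => (opa ((K + 1) * m) F).eval ζ * p.eval ζ - 1) atTop (nhds 0) :=
    squeeze_zero_norm key hlim
  have h2 := (h1.add_const 1).mul_const (p.eval ζ)⁻¹
  simp only [sub_add_cancel, zero_add, one_mul, mul_inv_cancel_right₀ hpζ] at h2
  obtain ⟨K, hK⟩ := (h2.eventually (hB.mem_nhds hpB)).exists
  exact ⟨_, hK⟩

/-- The Fejér-type mean `(1/m) ∑_{j<m} (ζ̄ z)ʲ`: it has value `1` at `ζ` and multiplier norm at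
most `1`, but small `H²` norm. -/
def peak (ζ : ℂ) (m : ℕ) : ℂ[X] :=
  ∑ j ∈ Finset.range m, monomial j ((m : ℂ)⁻¹ * (starRingEnd ℂ ζ) ^ j)

lemma eval_peak {ζ : ℂ} (hζ : ‖ζ‖ = 1) {m : ℕ} (hm : m ≠ 0) : (peak ζ m).eval ζ = 1 := by
  have h : starRingEnd ℂ ζ * ζ = 1 := by
    rw [Complex.conj_mul', hζ]
    simp
  have hm' : (m : ℂ) ≠ 0 := by exact_mod_cast hm
  simp [peak, eval_finsetSum, mul_assoc, ← mul_pow, h, hm']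

lemma norm_mulOp_peak_le {ζ : ℂ} (hζ : ‖ζ‖ = 1) (m : ℕ) : ‖mulOp (peak ζ m)‖ ≤ 1 := by
  rw [peak, map_sum]
  calc _ ≤ ∑ j ∈ Finset.range m, (m : ℝ)⁻¹ := by
        refine norm_sum_le_of_le _ fun j _ => ?_
        rw [mulOp, aeval_monomial, ← Algebra.smul_def, norm_smul]
        have := norm_shift_pow_le j
        simpa [hζ] using mul_le_mul_of_nonneg_left this (by positivity : 0 ≤ (m : ℝ)⁻¹)
    _ ≤ 1 := by
        simpa using mul_inv_le_one

lemma norm_peak_sq {ζ : ℂ} (hζ : ‖ζ‖ = 1) {m : ℕ} (hm : m ≠ 0) :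
    ‖mulOp (peak ζ m) oneH‖ ^ 2 = (m : ℝ)⁻¹ := by
  have h1 : mulOp (peak ζ m) oneH =
      ∑ j ∈ Finset.range m, lp.single 2 j ((m : ℂ)⁻¹ * (starRingEnd ℂ ζ) ^ j) := by
    ext n
    rw [mulOp_oneH_apply, lp.coeFn_sum, Finset.sum_apply]
    simp [peak, coeff_monomial, lp.single_apply, Pi.single_apply, eq_comm]
  have h2 := lp.norm_sum_single (E := fun _ : ℕ => ℂ) (p := 2) (by norm_num)
    (fun j => (m : ℂ)⁻¹ * (starRingEnd ℂ ζ) ^ j) (Finset.range m)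
  rw [← h1] at h2
  have hm' : (m : ℝ) ≠ 0 := by exact_mod_cast hm
  simp only [ENNReal.toReal_ofNat, Real.rpow_ofNat, norm_mul, norm_inv, Complex.norm_natCast,
    norm_pow, RCLike.norm_conj, hζ, one_pow, mul_one, Finset.sum_const, Finset.card_range,
    nsmul_eq_mul] at h2
  rw [h2]
  field_simp

lemma tendsto_norm_peak {ζ : ℂ} (hζ : ‖ζ‖ = 1) :
    Tendsto (fun m : ℕ => ‖mulOp (peak ζ m) oneH‖) atTop (nhds 0) := by
  have h := (tendsto_inv_atTop_nhds_zero_nat (𝕜 := ℝ)).sqrt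
  rw [Real.sqrt_zero] at h
  refine h.congr' ?_
  filter_upwards [eventually_ne_atTop 0] with m hm
  rw [← norm_peak_sq hζ hm, Real.sqrt_sq (norm_nonneg _)]

/-- `InvPoly` is stable under multiplication by `1 + a u` when `|a| < 1` and `u` has multiplier
norm at most `1`, since Neumann series invert both factors. -/
lemma exists_approx_inv {p u : ℂ[X]} (hp : ∃ s : ℂ[X], ‖mulOp (1 - s * p)‖ < 1)
    (hu : ‖mulOp u‖ ≤ 1) {a : ℂ} (ha : ‖a‖ < 1) :
    ∃ s : ℂ[X], ‖mulOp (1 - s * (p * (1 + C a * u)))‖ < 1 := by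
  obtain ⟨s, hs⟩ := hp
  have hy : ‖mulOp (-(C a * u))‖ < 1 := by
    rw [map_neg, norm_neg, ← smul_eq_C_mul, map_smul, norm_smul]
    nlinarith [norm_nonneg a, norm_nonneg (mulOp u)]
  set x := 1 - s * p with hx
  set y := -(C a * u) with hydef
  obtain ⟨K, hK⟩ := exists_pow_lt_of_lt_one (by norm_num : (0 : ℝ) < 1 / 4) hs
  obtain ⟨M, hM⟩ := exists_pow_lt_of_lt_one (by norm_num : (0 : ℝ) < 1 / 4) hy
  refine ⟨s * (∑ i ∈ Finset.range K, x ^ i) * ∑ i ∈ Finset.range M, y ^ i, ?_⟩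
  have e1 : s * p * (∑ i ∈ Finset.range K, x ^ i) = 1 - x ^ K := by
    linear_combination -geom_sum_mul x K
  have e2 : (1 + C a * u) * ∑ i ∈ Finset.range M, y ^ i = 1 - y ^ M := by
    linear_combination -geom_sum_mul y M
  have e3 : 1 - s * (∑ i ∈ Finset.range K, x ^ i) * (∑ i ∈ Finset.range M, y ^ i) *
      (p * (1 + C a * u)) = x ^ K + y ^ M - x ^ K * y ^ M := by
    linear_combination (-(1 + C a * u) * ∑ i ∈ Finset.range M, y ^ i) * e1 - (1 - x ^ K) * e2
  rw [e3, map_sub, map_add, map_mul]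
  have hX := (norm_mulOp_pow_le x K).trans hK.le
  have hY := (norm_mulOp_pow_le y M).trans hM.le
  have hXY := (norm_mul_le (mulOp (x ^ K)) (mulOp (y ^ M))).trans
    (mul_le_mul hX hY (norm_nonneg _) (by norm_num))
  have := norm_sub_le (mulOp (x ^ K) + mulOp (y ^ M)) (mulOp (x ^ K) * mulOp (y ^ M))
  have := norm_add_le (mulOp (x ^ K)) (mulOp (y ^ M))
  linarith

/-- Multiplying by `1 + (d - 1) u` with `u` a peak polynomial changes the value at `ζ` by the
factor `d` and the function only slightly in `H²`. -/
lemma exists_perturb_one {ζ : ℂ} (hζ : ‖ζ‖ = 1) {d : ℂ} (hd0 : d ≠ 0) (hd : ‖d - 1‖ < 1)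
    {p : ℂ[X]} (hp : p ∈ InvPoly ζ) {ε : ℝ} (hε : 0 < ε) :
    ∃ p' ∈ InvPoly ζ, ‖mulOp p' oneH - mulOp p oneH‖ < ε ∧ p'.eval ζ = d * p.eval ζ := by
  have hlim := (tendsto_norm_peak hζ).const_mul (‖mulOp (p * C (d - 1))‖)
  rw [mul_zero] at hlim
  obtain ⟨m, hm, hm0⟩ := ((hlim.eventually (gt_mem_nhds hε)).and (eventually_ne_atTop 0)).exists
  have hval : (p * (1 + C (d - 1) * peak ζ m)).eval ζ = d * p.eval ζ := by
    simp [eval_peak hζ hm0]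
    ring
  refine ⟨p * (1 + C (d - 1) * peak ζ m), ⟨?_, ?_⟩, ?_, hval⟩
  · rw [hval]
    exact mul_ne_zero hd0 hp.1
  · exact exists_approx_inv hp.2 (norm_mulOp_peak_le hζ m) hd
  · have : p * (1 + C (d - 1) * peak ζ m) = p + p * C (d - 1) * peak ζ m := by ring
    rw [this, map_add, _root_.add_apply, add_sub_cancel_left]
    exact (norm_mulOp_apply_le_mul _ _ _).trans_lt hm

lemma exists_perturb_pow {ζ : ℂ} (hζ : ‖ζ‖ = 1) {d : ℂ} (hd0 : d ≠ 0) (hd : ‖d - 1‖ < 1)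
    {p : ℂ[X]} (hp : p ∈ InvPoly ζ) (N : ℕ) {ε : ℝ} (hε : 0 < ε) :
    ∃ p' ∈ InvPoly ζ, ‖mulOp p' oneH - mulOp p oneH‖ < ε ∧ p'.eval ζ = d ^ N * p.eval ζ := by
  induction N generalizing ε with
  | zero => exact ⟨p, hp, by simpa using hε, by simp⟩
  | succ N ih =>
    obtain ⟨p₁, hp₁, h₁, e₁⟩ := ih (half_pos hε)
    obtain ⟨p₂, hp₂, h₂, e₂⟩ := exists_perturb_one hζ hd0 hd hp₁ (half_pos hε)
    refine ⟨p₂, hp₂, ?_, by rw [e₂, e₁]; ring⟩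
    have := norm_sub_le_norm_sub_add_norm_sub (mulOp p₂ oneH) (mulOp p₁ oneH) (mulOp p oneH)
    linarith

/-- Arbitrarily small `H²` perturbations inside `InvPoly ζ` attain every nonzero value at `ζ`. -/
lemma exists_perturb {ζ : ℂ} (hζ : ‖ζ‖ = 1) {c : ℂ} (hc : c ≠ 0)
    {p : ℂ[X]} (hp : p ∈ InvPoly ζ) {ε : ℝ} (hε : 0 < ε) :
    ∃ p' ∈ InvPoly ζ, ‖mulOp p' oneH - mulOp p oneH‖ < ε ∧ p'.eval ζ = c := by
  -- An `N`-th root `d` of `c / p(ζ)` close to `1` is applied `N` times.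
  obtain ⟨l, hl⟩ : ∃ l, Complex.exp l = c / p.eval ζ :=
    ⟨_, Complex.exp_log (div_ne_zero hc hp.1)⟩
  have hlim : Tendsto (fun N : ℕ => ‖Complex.exp (l / N) - 1‖) atTop (nhds 0) := by
    have h1 : Tendsto (fun N : ℕ => l / N) atTop (nhds 0) :=
      tendsto_const_div_atTop_nhds_zero_nat l
    have h2 := (((Complex.continuous_exp.tendsto 0).comp h1).sub_const 1).norm
    simpa using h2
  obtain ⟨N, hN, hN0⟩ :=
    ((hlim.eventually (gt_mem_nhds one_pos)).and (eventually_ne_atTop 0)).exists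
  obtain ⟨p', hp', h', e'⟩ := exists_perturb_pow hζ (Complex.exp_ne_zero _) hN hp N hε
  refine ⟨p', hp', h', ?_⟩
  have hN' : (N : ℂ) ≠ 0 := by exact_mod_cast hN0
  rw [e', ← Complex.exp_nat_mul, mul_div_cancel₀ _ hN', hl, div_mul_cancel₀ _ hp.1]

/-! ### The Baire category argument -/

/-- For every `ζ ∈ 𝕋` there is a nonzero `f ∈ H²` such that the values
`Q_n(1/f)(ζ)`, `n ∈ ℕ`, of the optimal polynomial approximants at `ζ` are dense in `ℂ`. -/
theorem exists_denseRange_opa_values (ζ : ℂ) (hζ : ζ ∈ sphere (0 : ℂ) 1) :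
    ∃ f : H2, f ≠ 0 ∧ DenseRange fun n : ℕ => (opa n f).eval ζ := by
  have hζ1 : ‖ζ‖ = 1 := by simpa using hζ
  -- The Baire space is the closure in `H²` of the invertible polynomials.
  let D : Set H2 := (fun p => mulOp p oneH) '' InvPoly ζ
  let X := closure D
  have hX : IsClosed X := isClosed_closure
  have : CompleteSpace X := hX.completeSpace_coe
  have : Nonempty X := by
    refine ⟨_, subset_closure (Set.mem_image_of_mem _ (?_ : (1 : ℂ[X]) ∈ InvPoly ζ))⟩
    exact ⟨by simp, 1, by simp⟩
  -- Nonempty members of a countable basis of `ℂ` index the countably many density conditions.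
  let ι := {B : Set ℂ // B ∈ TopologicalSpace.countableBasis ℂ}
  have : Countable ι := (TopologicalSpace.countable_countableBasis ℂ).to_subtype
  let U : ι → Set X := fun B => {f | (f : H2) ≠ 0 ∧ ∃ n, (opa n (f : H2)).eval ζ ∈ B.1}
  have hBo : ∀ B : ι, IsOpen B.1 := fun B => TopologicalSpace.isOpen_of_mem_countableBasis B.2
  have hUo : ∀ B, IsOpen (U B) := by
    intro B
    rw [isOpen_iff_mem_nhds]
    rintro f ⟨hf, n, hn⟩
    have h1 : ∀ᶠ g in nhds (f : H2), g ≠ 0 ∧ (opa n g).eval ζ ∈ B.1 :=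
      (isOpen_ne.eventually_mem hf).and
        ((continuousAt_opa_eval hf n ζ).eventually ((hBo B).mem_nhds hn))
    filter_upwards [continuous_subtype_val.continuousAt.eventually h1] with g hg
    exact ⟨hg.1, n, hg.2⟩
  have hUd : ∀ B, Dense (U B) := by
    intro B
    obtain ⟨w, hwB, hw0⟩ : ∃ w ∈ B.1, w ≠ 0 :=
      (dense_compl_singleton (0 : ℂ)).inter_open_nonempty _ (hBo B)
        (TopologicalSpace.nonempty_of_mem_countableBasis B.2)
    rw [Metric.dense_iff]
    intro f ε hε
    obtain ⟨_, ⟨p, hp, rfl⟩, hfp⟩ := Metric.mem_closure_iff.1 f.2 (ε / 2) (half_pos hε)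
    obtain ⟨p', hp', hpp', hval⟩ := exists_perturb hζ1 (inv_ne_zero hw0) hp (half_pos hε)
    refine ⟨⟨mulOp p' oneH, subset_closure ⟨p', hp', rfl⟩⟩, ?_, ?_, ?_⟩
    · rw [← dist_eq_norm, dist_comm] at hpp'
      rw [Metric.mem_ball, dist_comm, Subtype.dist_eq]
      have := dist_triangle (f : H2) (mulOp p oneH) (mulOp p' oneH)
      simp only at hfp ⊢
      linarith
    · refine mulOp_oneH_ne_zero ?_
      rintro rfl
      exact hp'.1 (by simp)
    · exact exists_opa_eval_mem hζ1 hp' (hBo B) (by rwa [hval, inv_inv])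
  obtain ⟨f, hf⟩ := (dense_iInter_of_isOpen hUo hUd).nonempty
  rw [Set.mem_iInter] at hf
  have hne : (f : H2) ≠ 0 := by
    obtain ⟨B, hB, -, -⟩ := (TopologicalSpace.isBasis_countableBasis ℂ).exists_subset_of_mem_open
      (Set.mem_univ (0 : ℂ)) isOpen_univ
    exact (hf ⟨B, hB⟩).1
  refine ⟨f, hne, ?_⟩
  rw [DenseRange, (TopologicalSpace.isBasis_countableBasis ℂ).dense_iff]
  intro B hB _
  obtain ⟨-, n, hn⟩ := hf ⟨B, hB⟩
  exact ⟨_, hn, n, rfl⟩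

end
end

section
/- Let E be a closed subset of the unit circle 𝕋 of Lebesgue (arc-length) measure zero. Let g ∈ H² be non-vanishing on the open unit disc 𝔻, and let f ∈ C(E) be non-vanishing on E. Then there exists a sequence of polynomials (P_n), each having no zeros on the closed unit disc, such that P_n → g in the H² norm and P_n → f uniformly on E. -/
/-! For a closed null set `E` in the circle, values on `E` can be prescribed almost freely at no cost in
`H²`. The tool is an approximate peak function in the manner of Fatou (`exists_peak_function`): a
function `F`, holomorphic past the closed disc, close to `1` on `E` and small in mean square over the
circle. It is built from explicit rational functions attached to a cover of `E` by arcs of small total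
length.

First, `g` is replaced by a polynomial `Q` without zeros on the closed disc, a Taylor polynomial of a
dilation of `g` (`exists_zeroFree_near_h2`). Next, `E` is totally disconnected, so the zero-free
function `f / Q` is uniformly close on `E` to some `exp φ` with `φ` continuous (`exists_exp_near`).
The peak function also shows that polynomials are dense in `C(E)` (`exists_polynomial_near`), which
gives a polynomial `Ψ` close to `φ` on `E`. Then `Q · exp (Ψ F)` has no zeros, is close to `f` on `E`,
and is close to `Q` in `H²`, since on the circle it differs from `Q` by `O(|F|)`; a Taylor polynomial
of it is the required approximant (`exists_zeroFree_near_polynomial`). -/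

open MeasureTheory Filter Metric Polynomial

noncomputable section

/-- The `H²` distance between a polynomial `P` and `g ∈ H²`. -/
def h2DistPoly (P : Polynomial ℂ) (g : H2) : ℝ :=
  Real.sqrt (∑' k, ‖P.coeff k - g k‖ ^ 2)

/-! ### Taylor polynomials and the `H²` norm on the circle -/

/-- A function holomorphic on a disc of radius greater than `1` is uniformly approximated on the
closed unit disc by its Taylor polynomials at `0`. -/
theorem exists_taylor_near {u : ℂ → ℂ} {R : ℝ} (hR : 1 < R) (hu : DifferentiableOn ℂ u (ball 0 R))
    {ε : ℝ} (hε : 0 < ε) :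
    ∃ p : ℂ[X], ∀ z ∈ closedBall (0 : ℂ) 1, ‖p.eval z - u z‖ < ε := by
  obtain ⟨r₂, h₂, h₂R⟩ := exists_between hR
  obtain ⟨r₁, h₁, h₁₂⟩ := exists_between h₂
  lift r₂ to NNReal using by linarith
  lift r₁ to NNReal using by linarith
  have hd : DifferentiableOn ℂ u (closedBall 0 (r₂ : ℝ)) :=
    hu.mono (closedBall_subset_ball h₂R)
  have hp := hd.hasFPowerSeriesOnBall (by exact_mod_cast lt_trans one_pos h₂)
  have ht := hp.tendstoUniformlyOn (r' := r₁) (by exact_mod_cast h₁₂)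
  obtain ⟨n, hn⟩ := (Metric.tendstoUniformlyOn_iff.1 ht ε hε).exists
  refine ⟨∑ k ∈ Finset.range n, Polynomial.C ((cauchyPowerSeries u 0 r₂).coeff k) * X ^ k,
    fun z hz => ?_⟩
  have := hn z (closedBall_subset_ball h₁ hz)
  rw [dist_comm, dist_eq_norm, zero_add] at this
  refine lt_of_eq_of_lt (congrArg (fun w => ‖w - u z‖) ?_) this
  rw [FormalMultilinearSeries.partialSum, Polynomial.eval_finsetSum]
  refine Finset.sum_congr rfl fun k _ => ?_
  rw [FormalMultilinearSeries.apply_eq_pow_smul_coeff]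
  simp only [Polynomial.eval_mul, Polynomial.eval_C, Polynomial.eval_pow, Polynomial.eval_X,
    smul_eq_mul, FormalMultilinearSeries.coeff]
  ring

/-- Parseval: the squared `H²` norm of a polynomial is at most the mean over the circle of any
continuous majorant of its squared modulus. -/
theorem tsum_coeff_le {P : ℂ[X]} {v : ℂ → ℝ} (hv : ContinuousOn v (sphere 0 1))
    (h : ∀ z ∈ sphere (0 : ℂ) 1, ‖P.eval z‖ ^ 2 ≤ v z) :
    ∑' k, ‖P.coeff k‖ ^ 2 ≤ Real.circleAverage v 0 1 := by
  have : ∑' k, ‖P.coeff k‖ ^ 2 = ∑ k ∈ P.support, ‖P.coeff k‖ ^ 2 :=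
    tsum_eq_sum fun k hk => by simp [Polynomial.notMem_support_iff.1 hk]
  rw [this, P.sum_sq_norm_coeff_eq_circleAverage]
  refine Real.circleAverage_mono ?_ (ContinuousOn.circleIntegrable zero_le_one hv) (by simpa using h)
  exact ContinuousOn.circleIntegrable zero_le_one (by fun_prop)

theorem norm_exp_sub_one_le_mul_exp (w : ℂ) : ‖Complex.exp w - 1‖ ≤ ‖w‖ * Real.exp ‖w‖ := by
  simpa using Complex.norm_exp_sub_sum_le_norm_mul_exp w 1

/-! ### Null subsets of the circle -/

/-- A null subset of the circle is totally disconnected: the real and imaginary parts of a connected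
subset are intervals of measure zero, being images of null sets under cosine and sine. -/
theorem isTotallyDisconnected_of_circleNull {E : Set ℂ} (hE : E ⊆ sphere (0 : ℂ) 1)
    (hEnull : circleNull E) :
    IsTotallyDisconnected E := by
  have key : ∀ φ : ℂ → ℝ, Continuous φ → Differentiable ℝ φ → ∀ S ⊆ E, IsPreconnected S →
      (φ '' S).Subsingleton := by
    intro φ hc hφ S hS hpre
    have h0 : volume (φ '' S) = 0 := by
      refine measure_mono_null ?_ (addHaar_image_eq_zero_of_differentiableOn_of_addHaar_eq_zero
        volume (f := fun θ : ℝ => φ (Complex.exp (θ * Complex.I))) ?_ hEnull)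
      · rintro _ ⟨z, hz, rfl⟩
        have h1 : ‖z‖ = 1 := by simpa using hE (hS hz)
        have h2 : Complex.exp (z.arg * Complex.I) = z := by
          simpa [h1] using Complex.norm_mul_exp_arg_mul_I z
        exact ⟨z.arg, by simpa [h2] using hS hz, by simp [h2]⟩
      · refine (hφ.comp (f := fun θ : ℝ => Complex.exp (θ * Complex.I)) ?_).differentiableOn
        have : Differentiable ℝ (fun θ : ℝ => (θ : ℂ)) := Complex.ofRealCLM.differentiable
        exact ((this.mul_const _)).cexp
    have hp := hpre.image φ hc.continuousOn
    intro a ha b hb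
    by_contra hab
    wlog hlt : a < b generalizing a b
    · exact this hb ha (Ne.symm hab) (lt_of_le_of_ne (not_lt.1 hlt) (Ne.symm hab))
    have := measure_mono_null (hp.Icc_subset ha hb) h0
    simp at this
    linarith
  intro S hS hpre x hx y hy
  apply Complex.ext
  · exact key Complex.re Complex.continuous_re Complex.reCLM.differentiable S hS hpre
      ⟨x, hx, rfl⟩ ⟨y, hy, rfl⟩
  · exact key Complex.im Complex.continuous_im Complex.imCLM.differentiable S hS hpre
      ⟨x, hx, rfl⟩ ⟨y, hy, rfl⟩

/-- A closed null subset of the circle is covered by finitely many discs, centred on the circle, whose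
radii have arbitrarily small sum. -/
theorem exists_arc_cover {E : Set ℂ} (hE : E ⊆ sphere (0 : ℂ) 1)
    (hEclosed : IsClosed E) (hEnull : circleNull E) {δ : ℝ} (hδ : 0 < δ) :
    ∃ (t : Finset ℝ) (l : ℝ → ℝ), (∀ θ ∈ t, 0 < l θ) ∧ ∑ θ ∈ t, l θ ≤ δ ∧
      ∀ z ∈ E, ∃ θ ∈ t, ‖z - Complex.exp (θ * Complex.I)‖ ≤ l θ := by
  set s : Set ℝ := {θ : ℝ | Complex.exp (θ * Complex.I) ∈ E} with hs
  -- The Besicovitch covering theorem gives a countable cover by closed intervals of total length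
  -- at most `δ`, the set of arguments being null. Doubling the radii makes the intervals open, and
  -- a radius `2 r x` is the length of the original interval, so that the radii still sum to at most `δ`.
  obtain ⟨t, r, -, -, hr, hcov, hsum⟩ := Besicovitch.exists_closedBall_covering_tsum_measure_le
    (volume : Measure ℝ) (ε := ENNReal.ofReal δ) (by simpa using hδ) (fun _ => Set.Ioi 0) s
    (fun x _ η hη => ⟨η / 2, by simp [hη]⟩)
  have hK : IsCompact (s ∩ Set.Icc (-Real.pi) Real.pi) :=
    isCompact_Icc.inter_left (hEclosed.preimage (by fun_prop))
  obtain ⟨b, hbt, hbc⟩ := hK.elim_finite_subcover_image (b := t)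
    (c := fun x => ball x (2 * r x)) (fun _ _ => isOpen_ball) (by
      refine Set.inter_subset_left.trans (hcov.trans ?_)
      refine Set.iUnion₂_mono fun x hx => closedBall_subset_ball ?_
      have : 0 < r x := hr x hx
      linarith)
  obtain ⟨hbfin, hbc⟩ := hbc
  refine ⟨hbfin.toFinset, fun x => 2 * r x, ?_, ?_, ?_⟩
  · intro x hx
    have : 0 < r x := hr x (hbt (by simpa using hx))
    linarith
  · have hrx : ∀ x ∈ hbfin.toFinset, 0 < r x := fun x hx => hr x (hbt (by simpa using hx))
    have h1 : ∑ x ∈ hbfin.toFinset, volume (closedBall x (r x)) ≤ ENNReal.ofReal δ := by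
      have h2 : volume s = 0 := hEnull
      rw [h2, zero_add] at hsum
      refine le_trans ?_ hsum
      rw [tsum_subtype t (fun x => volume (closedBall x (r x)))]
      refine le_trans (le_of_eq ?_) (ENNReal.sum_le_tsum hbfin.toFinset)
      exact Finset.sum_congr rfl fun x hx => by
        rw [Set.indicator_of_mem (hbt (by simpa using hx))]
    simp only [Real.volume_closedBall] at h1
    rw [← ENNReal.ofReal_sum_of_nonneg (fun x hx => by linarith [hrx x hx])] at h1
    exact (ENNReal.ofReal_le_ofReal_iff hδ.le).1 h1
  · intro z hz
    have h1 : ‖z‖ = 1 := by simpa using hE hz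
    have h2 : Complex.exp (z.arg * Complex.I) = z := by
      simpa [h1] using Complex.norm_mul_exp_arg_mul_I z
    have := @hbc z.arg ⟨by simpa [hs, h2] using hz, (Complex.neg_pi_lt_arg z).le, Complex.arg_le_pi z⟩
    simp only [Set.mem_iUnion, mem_ball, Real.dist_eq] at this
    obtain ⟨θ, hθ, hlt⟩ := this
    refine ⟨θ, by simpa using hθ, le_trans ?_ hlt.le⟩
    have h3 : z - Complex.exp (θ * Complex.I) =
        Complex.exp (θ * Complex.I) * (Complex.exp (Complex.I * ((z.arg - θ : ℝ) : ℂ)) - 1) := by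
      rw [mul_sub, ← Complex.exp_add]
      conv_lhs => rw [← h2]
      push_cast
      ring_nf
    rw [h3, norm_mul, Complex.norm_exp_ofReal_mul_I, one_mul]
    exact Real.norm_exp_I_mul_ofReal_sub_one_le

/-! ### An approximate peak function

With `e = exp (iθ)`, the function `l / (1 + l - conj e * z)` has its pole at `(1 + l) e`, just outside the
closed disc; it has nonnegative real part on the disc, and real part at least `1 / 4` at points of the
circle within `l` of `e`. -/

theorem peak_summand_re {z : ℂ} {θ l : ℝ} (hl : 0 < l) (hz : ‖z‖ < 1 + l) :
    0 < (1 + l - Complex.exp (-(θ * Complex.I)) * z).re ∧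
    0 ≤ ((l : ℂ) / (1 + l - Complex.exp (-(θ * Complex.I)) * z)).re ∧
    (‖z‖ = 1 → ‖z - Complex.exp (θ * Complex.I)‖ ≤ l →
      1 / 4 ≤ ((l : ℂ) / (1 + l - Complex.exp (-(θ * Complex.I)) * z)).re) := by
  have he : ‖Complex.exp (-(θ * Complex.I))‖ = 1 := by
    rw [← neg_mul, ← Complex.ofReal_neg, Complex.norm_exp_ofReal_mul_I]
  set w := Complex.exp (-(θ * Complex.I)) * z with hw
  have hwn : ‖w‖ = ‖z‖ := by rw [hw, norm_mul, he, one_mul]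
  have hre : w.re ≤ ‖w‖ := Complex.re_le_norm w
  have hR : (1 + (l : ℂ) - w).re = 1 + l - w.re := by simp
  have hpos : 0 < (1 + (l : ℂ) - w).re := by rw [hR]; linarith
  have hns : 0 < Complex.normSq (1 + (l : ℂ) - w) := by
    rw [Complex.normSq_pos]; intro h; rw [h] at hpos; simp at hpos
  have hdiv : ((l : ℂ) / (1 + l - w)).re =
      l * (1 + (l : ℂ) - w).re / Complex.normSq (1 + (l : ℂ) - w) := by
    rw [Complex.div_re]; simp
  refine ⟨hpos, ?_, fun h1 hd => ?_⟩
  · rw [hdiv]; positivity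
  · have h1w : ‖1 - w‖ ≤ l := by
      have : 1 - w = -(Complex.exp (-(θ * Complex.I)) * (z - Complex.exp (θ * Complex.I))) := by
        rw [mul_sub, ← Complex.exp_add, hw]; simp
      rw [this, norm_neg, norm_mul, he, one_mul]; exact hd
    have hn : ‖1 + (l : ℂ) - w‖ ≤ 2 * l := by
      calc ‖1 + (l : ℂ) - w‖ = ‖(1 - w) + (l : ℂ)‖ := by ring_nf
        _ ≤ ‖1 - w‖ + ‖(l : ℂ)‖ := norm_add_le _ _
        _ ≤ 2 * l := by rw [Complex.norm_real, Real.norm_of_nonneg hl.le]; linarith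
    rw [hdiv, le_div_iff₀ hns, Complex.normSq_eq_norm_sq, hR]
    have : ‖1 + (l : ℂ) - w‖ ^ 2 ≤ (2 * l) ^ 2 := by gcongr
    nlinarith

/-- A quantitative form of Fatou's peak function: `F` is holomorphic past the closed disc, bounded by
`2`, within `η` of `1` on `E`, small at `0` and small in mean square over the circle.

It is `F = H / (1 + H)` where `H` is a large multiple `N` of the sum of the functions of
`peak_summand_re` over a cover of `E` with small total radius. On `E` the real part of `H` is at
least `N / 4`, so `F` is close to `1`, while `F 0` is small because `H 0` is at most `N` times the sum of the radii. Since
`1 / (1 + H)` has modulus at most `1`, one has `|F|² ≤ 2 Re F`, and the mean value property bounds the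
mean of `|F|²` by `2 Re F(0)`. -/
theorem exists_peak_function {E : Set ℂ} (hE : E ⊆ sphere (0 : ℂ) 1)
    (hEclosed : IsClosed E) (hEnull : circleNull E) {η : ℝ} (hη : 0 < η) :
    ∃ (F : ℂ → ℂ) (R : ℝ), 1 < R ∧ DifferentiableOn ℂ F (ball 0 R) ∧
      (∀ z ∈ closedBall (0 : ℂ) 1, ‖F z‖ ≤ 2) ∧ (∀ z ∈ E, ‖F z - 1‖ ≤ η) ∧ ‖F 0‖ ≤ η ∧
      Real.circleAverage (fun z => ‖F z‖ ^ 2) 0 1 ≤ η := by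
  -- With `N = 4 / η`, this bound on the total radius makes `‖H 0‖ ≤ N η² / 8 = η / 2`.
  have hδ : 0 < η ^ 2 / 8 := by positivity
  obtain ⟨t, l, hl, hsum, hcov⟩ := exists_arc_cover hE hEclosed hEnull hδ
  obtain ⟨R, hR, hRl⟩ : ∃ R : ℝ, 1 < R ∧ ∀ θ ∈ t, R < 1 + l θ := by
    have h1 : ∀ᶠ R : ℝ in nhdsWithin 1 (Set.Ioi 1), ∀ θ ∈ t, R < 1 + l θ :=
      (Finset.eventually_all t).2 fun θ hθ =>
        nhdsWithin_le_nhds (Iio_mem_nhds (by linarith [hl θ hθ]))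
    obtain ⟨R, h, h'⟩ := (h1.and self_mem_nhdsWithin).exists
    exact ⟨R, h', h⟩
  set N : ℝ := 4 / η with hN
  have hNpos : 0 < N := by positivity
  set D : ℝ → ℂ → ℂ := fun θ z => 1 + (l θ : ℂ) - Complex.exp (-(θ * Complex.I)) * z with hD
  set H : ℂ → ℂ := fun z => N * ∑ θ ∈ t, (l θ : ℂ) / D θ z with hH
  have hterm : ∀ z ∈ ball (0 : ℂ) R, ∀ θ ∈ t, ‖z‖ < 1 + l θ := fun z hz θ hθ =>
    lt_trans (by simpa using hz) (hRl θ hθ)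
  have hre : ∀ z, (H z).re = N * ∑ θ ∈ t, ((l θ : ℂ) / D θ z).re := fun z => by
    simp [hH, Complex.re_sum]
  have hHre : ∀ z ∈ ball (0 : ℂ) R, 0 ≤ (H z).re := fun z hz => by
    rw [hre]
    exact mul_nonneg hNpos.le (Finset.sum_nonneg fun θ hθ =>
      (peak_summand_re (hl θ hθ) (hterm z hz θ hθ)).2.1)
  have hn1 : ∀ z, 1 + (H z).re ≤ ‖1 + H z‖ := fun z => by
    simpa using Complex.re_le_norm (1 + H z)
  have hne : ∀ z ∈ ball (0 : ℂ) R, 1 + H z ≠ 0 := fun z hz h => by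
    have h1 := hn1 z
    have h2 := hHre z hz
    rw [h, norm_zero] at h1
    linarith
  have hHd : DifferentiableOn ℂ H (ball 0 R) := by
    refine (DifferentiableOn.fun_sum fun θ hθ => ?_).const_mul _
    refine (differentiableOn_const _).div (by fun_prop) fun z hz h => ?_
    have := (peak_summand_re (θ := θ) (hl θ hθ) (hterm z hz θ hθ)).1
    simp only [hD] at h
    rw [h] at this
    simp at this
  have hsub : closedBall (0 : ℂ) 1 ⊆ ball 0 R := closedBall_subset_ball hR
  have hK : ∀ z ∈ ball (0 : ℂ) R, ‖1 / (1 + H z)‖ ≤ 1 := fun z hz => by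
    rw [norm_div, norm_one]
    exact div_le_one_of_le₀ (by linarith [hn1 z, hHre z hz]) (norm_nonneg _)
  have hFd : DifferentiableOn ℂ (fun z => 1 - 1 / (1 + H z)) (ball 0 R) :=
    (differentiableOn_const _).sub ((differentiableOn_const _).div (hHd.const_add _) hne)
  have hF0 : ‖1 - 1 / (1 + H 0)‖ ≤ η / 2 := by
    have h0 : (0 : ℂ) ∈ ball (0 : ℂ) R := by simp; linarith
    have hHn : ‖H 0‖ ≤ η / 2 := by
      have : ‖∑ θ ∈ t, (l θ : ℂ) / D θ 0‖ ≤ η ^ 2 / 8 := by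
        refine (norm_sum_le _ _).trans ((Finset.sum_le_sum fun θ hθ => ?_).trans hsum)
        have hp := hl θ hθ
        have : D θ 0 = ((1 + l θ : ℝ) : ℂ) := by simp [hD]
        rw [this, norm_div, Complex.norm_real, Complex.norm_real, Real.norm_of_nonneg hp.le,
          Real.norm_of_nonneg (by linarith)]
        exact div_le_self hp.le (by linarith)
      calc ‖H 0‖ = N * ‖∑ θ ∈ t, (l θ : ℂ) / D θ 0‖ := by
            rw [hH]; simp only [norm_mul]; rw [Complex.norm_real, Real.norm_of_nonneg hNpos.le]
        _ ≤ N * (η ^ 2 / 8) := by gcongr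
        _ = η / 2 := by rw [hN]; field_simp; norm_num
    have : 1 - 1 / (1 + H 0) = H 0 * (1 / (1 + H 0)) := by
      have := hne 0 h0
      field_simp; ring
    rw [this, norm_mul]
    nlinarith [hK 0 h0, norm_nonneg (H 0)]
  refine ⟨fun z => 1 - 1 / (1 + H z), R, hR, hFd, fun z hz => ?_, fun z hz => ?_, ?_, ?_⟩
  · have := norm_sub_le 1 (1 / (1 + H z))
    have h2 := hK z (hsub hz)
    rw [norm_one] at this
    linarith
  · have hz1 : ‖z‖ = 1 := by simpa using hE hz
    have hzR : z ∈ ball (0 : ℂ) R := hsub (by simp [hz1])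
    obtain ⟨θ, hθ, hle⟩ := hcov z hz
    have h4 : 1 / 4 ≤ ∑ θ ∈ t, ((l θ : ℂ) / D θ z).re :=
      ((peak_summand_re (hl θ hθ) (hterm z hzR θ hθ)).2.2 hz1 hle).trans
        (Finset.single_le_sum (f := fun θ => ((l θ : ℂ) / D θ z).re)
          (fun θ hθ => (peak_summand_re (hl θ hθ) (hterm z hzR θ hθ)).2.1) hθ)
    have h5 : 1 / η ≤ ‖1 + H z‖ := by
      have h6 := hre z
      have h7 : N * (1 / 4) = 1 / η := by rw [hN]; field_simp
      have := mul_le_mul_of_nonneg_left h4 hNpos.le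
      linarith [hn1 z]
    rw [sub_sub_cancel_left, norm_neg, norm_div, norm_one]
    exact (one_div_le (lt_of_lt_of_le (by positivity) h5) hη).2 h5
  · linarith
  -- `|F|² ≤ 2 Re F` for `F = 1 - k` amounts to `|k| ≤ 1`.
  · have hFc : ContinuousOn (fun z => 1 - 1 / (1 + H z)) (sphere 0 1) :=
      hFd.continuousOn.mono (sphere_subset_closedBall.trans hsub)
    have hmv : Real.circleAverage (fun z => 1 - 1 / (1 + H z)) 0 1 = 1 - 1 / (1 + H 0) := by
      refine DiffContOnCl.circleAverage (f := fun z => 1 - 1 / (1 + H z)) ?_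
      refine (hFd.mono ?_).diffContOnCl
      rw [abs_one, closure_ball _ one_ne_zero]
      exact hsub
    have hre2 : Real.circleAverage (fun z => 2 * (1 - 1 / (1 + H z)).re) 0 1 =
        2 * (1 - 1 / (1 + H 0)).re := by
      rw [← hmv]
      have := (((2 : ℝ) • Complex.reCLM).circleAverage_comp_comm
        (hFc.circleIntegrable zero_le_one))
      simpa [Function.comp_def] using this
    calc Real.circleAverage (fun z => ‖1 - 1 / (1 + H z)‖ ^ 2) 0 1
        ≤ Real.circleAverage (fun z => 2 * (1 - 1 / (1 + H z)).re) 0 1 := by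
          refine Real.circleAverage_mono ?_ ?_ fun z hz => ?_
          · exact ContinuousOn.circleIntegrable zero_le_one (hFc.norm.pow 2)
          · exact ContinuousOn.circleIntegrable zero_le_one
              (continuousOn_const.mul (Complex.continuous_re.comp_continuousOn hFc))
          · have h1 := hK z (hsub (sphere_subset_closedBall (by simpa using hz)))
            have h2 : ‖1 / (1 + H z)‖ ^ 2 ≤ 1 := pow_le_one₀ (norm_nonneg _) h1
            generalize 1 / (1 + H z) = k at h2
            rw [← Complex.normSq_eq_norm_sq, Complex.normSq_apply] at h2 ⊢
            simp only [Complex.sub_re, Complex.sub_im, Complex.one_re, Complex.one_im]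
            nlinarith
      _ = 2 * (1 - 1 / (1 + H 0)).re := hre2
      _ ≤ η := by linarith [Complex.re_le_norm (1 - 1 / (1 + H 0))]

/-! ### Approximation in `C(E)` -/

/-- Polynomials are dense in `C(E)`. By Stone–Weierstrass it suffices to approximate the conjugate
`1 / z` of `z` on `E`; with `F` the peak function, `(F - F(0)) / z` is close to `1 / z` on `E`
and is holomorphic past the closed disc. -/
theorem exists_polynomial_near {E : Set ℂ} (hE : E ⊆ sphere (0 : ℂ) 1)
    (hEclosed : IsClosed E) (hEnull : circleNull E) (φ : C(E, ℂ)) {ε : ℝ} (hε : 0 < ε) :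
    ∃ p : ℂ[X], ∀ z : E, ‖p.eval (z : ℂ) - φ z‖ < ε := by
  have hEc : IsCompact E := (isCompact_sphere (0 : ℂ) 1).of_isClosed_subset hEclosed hE
  have : CompactSpace E := isCompact_iff_compactSpace.1 hEc
  -- `A` is the uniform closure of the polynomials; it contains `z`, so it is everything once it
  -- contains the conjugate of `z`.
  set A := (polynomialFunctions E).topologicalClosure with hA
  have hstar : star (toContinuousMapOnAlgHom E X) ∈ A := by
    rw [hA, ← SetLike.mem_coe, Subalgebra.topologicalClosure_coe, Metric.mem_closure_iff]
    intro ε hε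
    obtain ⟨F, R, hR, hFd, -, hF1, hF0, -⟩ :=
      exists_peak_function hE hEclosed hEnull (η := ε / 5) (by positivity)
    obtain ⟨p, hp⟩ := exists_taylor_near hR hFd (ε := ε / 5) (by positivity)
    refine ⟨toContinuousMapOnAlgHom E p.divX, ⟨p.divX, Algebra.mem_top, rfl⟩, ?_⟩
    refine lt_of_le_of_lt ((ContinuousMap.dist_le (C := 4 * (ε / 5)) (by positivity)).2
      fun z => ?_) (by linarith)
    have hz1 : ‖(z : ℂ)‖ = 1 := by simpa using hE z.2
    have h1 := (hp z (by simp [hz1])).le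
    have h2 := (hp 0 (by simp)).le
    have h3 := hF1 z z.2
    have hconj : (z : ℂ) * (starRingEnd ℂ) z = 1 := by
      rw [Complex.mul_conj, Complex.normSq_eq_norm_sq, hz1]; simp
    have hdiv : p.divX.eval (z : ℂ) * z = p.eval (z : ℂ) - p.eval 0 := by
      conv_rhs => rw [← Polynomial.divX_mul_X_add p]
      simp
    have : dist ((star (toContinuousMapOnAlgHom E X)) z) (toContinuousMapOnAlgHom E p.divX z) =
        ‖(z : ℂ) * (p.divX.eval (z : ℂ) - (starRingEnd ℂ) z)‖ := by
      rw [dist_comm, dist_eq_norm, norm_mul, hz1, one_mul]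
      simp
    rw [this]
    have : (z : ℂ) * (p.divX.eval (z : ℂ) - (starRingEnd ℂ) z) =
        (p.eval (z : ℂ) - F z) + (F z - 1) - (p.eval 0 - F 0) - F 0 := by
      rw [mul_sub, hconj, mul_comm, hdiv]; ring
    rw [this]
    have := norm_sub_le ((p.eval (z : ℂ) - F z) + (F z - 1) - (p.eval 0 - F 0)) (F 0)
    have := norm_sub_le ((p.eval (z : ℂ) - F z) + (F z - 1)) (p.eval 0 - F 0)
    have := norm_add_le (p.eval (z : ℂ) - F z) (F z - 1)
    linarith
  have hle : ((polynomialFunctions E).starClosure : Set C(E, ℂ)) ⊆ A := by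
    have : (polynomialFunctions E).starClosure.toSubalgebra ≤ A := by
      rw [polynomialFunctions.starClosure_eq_adjoin_X, StarAlgebra.adjoin_toSubalgebra]
      refine Algebra.adjoin_le ?_
      rintro x (hx | hx)
      · rw [Set.mem_singleton_iff.1 hx]
        exact Subalgebra.le_topologicalClosure _ ⟨X, Algebra.mem_top, rfl⟩
      · rw [Set.star_singleton, Set.mem_singleton_iff] at hx
        rw [hx]; exact hstar
    exact this
  have hφ : φ ∈ A := by
    have h1 : φ ∈ (polynomialFunctions E).starClosure.topologicalClosure := by
      rw [polynomialFunctions.starClosure_topologicalClosure]; trivial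
    have h2 : φ ∈ closure ((polynomialFunctions E).starClosure : Set C(E, ℂ)) := h1
    exact closure_minimal hle (Subalgebra.isClosed_topologicalClosure _) h2
  rw [hA, ← SetLike.mem_coe, Subalgebra.topologicalClosure_coe, Metric.mem_closure_iff] at hφ
  obtain ⟨_, ⟨p, -, rfl⟩, hp⟩ := hφ ε hε
  refine ⟨p, fun z => ?_⟩
  have := lt_of_le_of_lt (ContinuousMap.dist_apply_le_dist z) hp
  rw [dist_comm, dist_eq_norm] at this
  exact this

/-- Continuous zero-free functions on `E` are uniform limits of exponentials: as `E` is compact and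
totally disconnected, they are uniformly close to functions factoring continuously through a finite
discrete space, on which a logarithm can be chosen pointwise. -/
theorem exists_exp_near {E : Set ℂ} (hE : E ⊆ sphere (0 : ℂ) 1)
    (hEclosed : IsClosed E) (hEnull : circleNull E) (u : C(E, ℂ)) (hu : ∀ z, u z ≠ 0)
    {ε : ℝ} (hε : 0 < ε) : ∃ φ : C(E, ℂ), ∀ z, ‖Complex.exp (φ z) - u z‖ < ε := by
  have hEc : IsCompact E := (isCompact_sphere (0 : ℂ) 1).of_isClosed_subset hEclosed hE
  have : CompactSpace E := isCompact_iff_compactSpace.1 hEc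
  have : TotallyDisconnectedSpace E :=
    totallyDisconnectedSpace_subtype_iff.2 (isTotallyDisconnected_of_circleNull hE hEnull)
  -- An approximation closer than `min |u|` takes nonzero values, so it has a logarithm.
  obtain ⟨c, hc, hcu⟩ : ∃ c > 0, ∀ z, c ≤ ‖u z‖ := by
    obtain ⟨c, hc, h⟩ := isCompact_univ.exists_forall_le' (f := fun z => ‖u z‖)
      u.continuous.norm.continuousOn (a := 0) fun z _ => norm_pos_iff.2 (hu z)
    exact ⟨c, hc, fun z => h z trivial⟩
  obtain ⟨n, g, h, hg, hgh⟩ := u.exists_finite_approximation_of_mem_nhds_diagonal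
    (nhdsSet_diagonal_le_uniformity (Metric.dist_mem_uniformity (lt_min hε hc)))
  have hne : ∀ z, h (g z) ≠ 0 := fun z h0 => by
    have h1 : dist (u z) (h (g z)) < min ε c := hgh z
    rw [h0, dist_zero_right] at h1
    linarith [hcu z, min_le_right ε c]
  refine ⟨⟨fun z => Complex.log (h (g z)),
    (continuous_of_discreteTopology (f := fun i => Complex.log (h i))).comp hg⟩, fun z => ?_⟩
  have h1 : dist (u z) (h (g z)) < min ε c := hgh z
  simp only [ContinuousMap.coe_mk, Complex.exp_log (hne z)]
  rw [dist_comm, dist_eq_norm] at h1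
  exact h1.trans_le (min_le_left _ _)

/-! ### Prescribing values on `E` with a small change in `H²` -/

theorem exists_pos_lower_bound {K : Set ℂ} (hK : IsCompact K) {u : ℂ → ℂ} (hu : ContinuousOn u K)
    (h0 : ∀ z ∈ K, u z ≠ 0) : ∃ c > 0, ∀ z ∈ K, c ≤ ‖u z‖ := by
  obtain ⟨c, hc, h⟩ := hK.exists_forall_le' (f := fun z => ‖u z‖) hu.norm (a := 0)
    fun z hz => norm_pos_iff.2 (h0 z hz)
  exact ⟨c, hc, h⟩

theorem exists_pos_upper_bound {K : Set ℂ} (hK : IsCompact K) {u : ℂ → ℂ} (hu : ContinuousOn u K) :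
    ∃ B > 0, ∀ z ∈ K, ‖u z‖ ≤ B := by
  obtain ⟨B, hB⟩ := hK.exists_bound_of_continuousOn hu
  exact ⟨max B 1, by positivity, fun z hz => (hB z hz).trans (le_max_left _ _)⟩

/-- A polynomial `Q` without zeros on the closed disc can be changed, by a small amount in `H²` and
without creating zeros, so as to be uniformly close to `f` on `E`. The polynomial is a Taylor polynomial
of `G = Q · exp (Ψ F)`, where the polynomial `Ψ` is close on `E` to a logarithm of a function close to
`f / Q`, and `F` is the peak function: on `E` the exponent is close to `Ψ`, while `|G - Q|` is
`O(|F|)` on the circle and so is small in mean square. -/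
theorem exists_zeroFree_near_polynomial {E : Set ℂ} (hE : E ⊆ sphere (0 : ℂ) 1)
    (hEclosed : IsClosed E) (hEnull : circleNull E)
    {f : ℂ → ℂ} (hfc : ContinuousOn f E) (hf0 : ∀ z ∈ E, f z ≠ 0)
    {Q : ℂ[X]} (hQ : ∀ z ∈ closedBall (0 : ℂ) 1, Q.eval z ≠ 0) {ε : ℝ} (hε : 0 < ε) :
    ∃ P : ℂ[X], (∀ z ∈ closedBall (0 : ℂ) 1, P.eval z ≠ 0) ∧
      ∑' k, ‖P.coeff k - Q.coeff k‖ ^ 2 ≤ ε ∧ ∀ z ∈ E, ‖P.eval z - f z‖ < ε := by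
  have hEc : IsCompact E := (isCompact_sphere (0 : ℂ) 1).of_isClosed_subset hEclosed hE
  have hD : IsCompact (closedBall (0 : ℂ) 1) := isCompact_closedBall 0 1
  have hED : E ⊆ closedBall (0 : ℂ) 1 := hE.trans sphere_subset_closedBall
  have : CompactSpace E := isCompact_iff_compactSpace.1 hEc
  obtain ⟨B, hB, hQB⟩ := exists_pos_upper_bound hD (u := fun z => Q.eval z) (by fun_prop)
  let u : C(E, ℂ) := ⟨fun z => f z / Q.eval (z : ℂ),
    (continuousOn_iff_continuous_domRestrict.1 hfc).div (by fun_prop) fun z => hQ z (hED z.2)⟩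
  obtain ⟨φ, hφ⟩ := exists_exp_near hE hEclosed hEnull u
    (fun z => div_ne_zero (hf0 z z.2) (hQ z (hED z.2))) (ε := ε / (4 * B)) (by positivity)
  obtain ⟨M, hM, hφM⟩ : ∃ M > 0, ∀ z, ‖Complex.exp (φ z)‖ ≤ M := by
    obtain ⟨M, h⟩ := isCompact_univ.exists_bound_of_continuousOn
      (f := fun z => Complex.exp (φ z)) (by fun_prop)
    exact ⟨max M 1, by positivity, fun z => (h z trivial).trans (le_max_left _ _)⟩
  obtain ⟨ρ, hρ, hρ1, hρ2⟩ : ∃ ρ > 0, 2 * ρ ≤ 1 ∧ B * (M * (2 * (2 * ρ))) ≤ ε / 4 := by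
    refine ⟨min (1 / 2) (ε / (16 * B * M)), by positivity, ?_, ?_⟩
    · linarith [min_le_left (1 / 2) (ε / (16 * B * M))]
    · have := min_le_right (1 / 2) (ε / (16 * B * M))
      rw [le_div_iff₀ (by positivity)] at this
      linarith
  obtain ⟨Ψ, hΨ⟩ := exists_polynomial_near hE hEclosed hEnull φ hρ
  obtain ⟨S, hS, hΨS⟩ := exists_pos_upper_bound hD (u := fun z => Ψ.eval z) (by fun_prop)
  set C : ℝ := B * S * Real.exp (2 * S) with hC
  have hCpos : 0 < C := by positivity
  obtain ⟨η, hη, hη1, hη2⟩ : ∃ η > 0, S * η ≤ ρ ∧ 2 * C ^ 2 * η ≤ ε / 2 := by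
    refine ⟨min (ρ / S) (ε / (4 * C ^ 2)), by positivity, ?_, ?_⟩
    · have := min_le_left (ρ / S) (ε / (4 * C ^ 2))
      rw [le_div_iff₀ (by positivity)] at this
      linarith
    · have := min_le_right (ρ / S) (ε / (4 * C ^ 2))
      rw [le_div_iff₀ (by positivity)] at this
      linarith
  obtain ⟨F, R, hR, hFd, hF2, hF1, -, hFavg⟩ := exists_peak_function hE hEclosed hEnull hη
  have hDR : closedBall (0 : ℂ) 1 ⊆ ball 0 R := closedBall_subset_ball hR
  have hFc : ContinuousOn F (closedBall 0 1) := hFd.continuousOn.mono hDR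
  set G : ℂ → ℂ := fun z => Q.eval z * Complex.exp (Ψ.eval z * F z) with hG
  have hGd : DifferentiableOn ℂ G (ball 0 R) :=
    Q.differentiable.differentiableOn.mul ((Ψ.differentiable.differentiableOn.mul hFd).cexp)
  obtain ⟨c, hc, hGc⟩ := exists_pos_lower_bound hD (hGd.continuousOn.mono hDR)
    fun z hz => mul_ne_zero (hQ z hz) (Complex.exp_ne_zero _)
  -- `τ ≤ min |G|` keeps the Taylor polynomial of `G` from vanishing on the closed disc.
  obtain ⟨τ, hτ, hτ1, hτε, hτc⟩ : ∃ τ > 0, τ ≤ 1 ∧ τ ≤ ε / 4 ∧ τ ≤ c :=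
    ⟨min 1 (min (ε / 4) c), by positivity, min_le_left _ _,
      (min_le_right _ _).trans (min_le_left _ _), (min_le_right _ _).trans (min_le_right _ _)⟩
  obtain ⟨P, hP⟩ := exists_taylor_near hR hGd hτ
  refine ⟨P, fun z hz h => ?_, ?_, fun z hz => ?_⟩
  · have := hP z hz
    rw [h, zero_sub, norm_neg] at this
    linarith [hGc z hz]
  · have hpt : ∀ z ∈ sphere (0 : ℂ) 1,
        ‖(P - Q).eval z‖ ^ 2 ≤ 2 * τ ^ 2 + 2 * C ^ 2 * ‖F z‖ ^ 2 := by
      intro z hz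
      have hz' := sphere_subset_closedBall hz
      have h1 := (hP z hz').le
      have h2 : ‖G z - Q.eval z‖ ≤ C * ‖F z‖ := by
        have h3 : G z - Q.eval z = Q.eval z * (Complex.exp (Ψ.eval z * F z) - 1) := by
          rw [hG]; ring
        have h4 : ‖Ψ.eval z * F z‖ ≤ S * ‖F z‖ := by
          rw [norm_mul]; gcongr; exact hΨS z hz'
        have h5 : ‖Ψ.eval z * F z‖ ≤ 2 * S := by nlinarith [hF2 z hz']
        calc ‖G z - Q.eval z‖ = ‖Q.eval z‖ * ‖Complex.exp (Ψ.eval z * F z) - 1‖ := by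
              rw [h3, norm_mul]
          _ ≤ B * ((S * ‖F z‖) * Real.exp (2 * S)) := by
              gcongr
              · exact hQB z hz'
              · exact (norm_exp_sub_one_le_mul_exp _).trans (by gcongr)
          _ = C * ‖F z‖ := by rw [hC]; ring
      have h6 : ‖(P - Q).eval z‖ ≤ τ + C * ‖F z‖ := by
        rw [Polynomial.eval_sub, ← sub_add_sub_cancel _ (G z)]
        exact (norm_add_le _ _).trans (add_le_add h1 h2)
      calc ‖(P - Q).eval z‖ ^ 2 ≤ (τ + C * ‖F z‖) ^ 2 := by gcongr
        _ ≤ _ := by nlinarith [sq_nonneg (τ - C * ‖F z‖)]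
    have hFs : ContinuousOn F (sphere 0 1) := hFc.mono sphere_subset_closedBall
    have hcont : ContinuousOn (fun z => ‖F z‖ ^ 2) (sphere 0 1) := hFs.norm.pow 2
    have h1 := tsum_coeff_le (v := fun z => 2 * τ ^ 2 + 2 * C ^ 2 * ‖F z‖ ^ 2)
      (continuousOn_const.add (continuousOn_const.mul hcont)) hpt
    simp only [Polynomial.coeff_sub] at h1
    refine h1.trans ?_
    rw [Real.circleAverage_fun_add (f₁ := fun _ => 2 * τ ^ 2)
      (f₂ := fun z => 2 * C ^ 2 * ‖F z‖ ^ 2) (circleIntegrable_const _ _ _)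
      (ContinuousOn.circleIntegrable zero_le_one (continuousOn_const.mul hcont)),
      Real.circleAverage_const]
    have h2 := Real.circleAverage_fun_smul (a := 2 * C ^ 2) (f := fun z => ‖F z‖ ^ 2)
      (c := (0 : ℂ)) (R := 1)
    simp only [smul_eq_mul] at h2
    rw [h2]
    have h3 : 2 * C ^ 2 * Real.circleAverage (fun z => ‖F z‖ ^ 2) 0 1 ≤ 2 * C ^ 2 * η := by
      gcongr
    nlinarith
  · have hz' := hED hz
    set q := Ψ.eval z * F z with hq
    set a := φ ⟨z, hz⟩ with ha
    have h1 := hP z hz'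
    -- Here `exp q = G z / Q z`, `exp a` is close to `f z / Q z`, and the two exponents are close.
    have h2 : ‖q - a‖ ≤ 2 * ρ := by
      have h3 : q - a = Ψ.eval z * (F z - 1) + (Ψ.eval z - a) := by rw [hq]; ring
      have h4 : ‖Ψ.eval z * (F z - 1)‖ ≤ S * η := by
        rw [norm_mul]
        exact mul_le_mul (hΨS z hz') (hF1 z hz) (norm_nonneg _) hS.le
      have h5 := hΨ ⟨z, hz⟩
      have := norm_add_le (Ψ.eval z * (F z - 1)) (Ψ.eval z - a)
      rw [h3]; linarith
    have h3 : ‖Complex.exp q - Complex.exp a‖ ≤ M * (2 * (2 * ρ)) := by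
      have : Complex.exp q - Complex.exp a = Complex.exp a * (Complex.exp (q - a) - 1) := by
        rw [mul_sub, ← Complex.exp_add]; ring_nf
      rw [this, norm_mul]
      have := Complex.norm_exp_sub_one_le (h2.trans hρ1)
      exact mul_le_mul (hφM _) (by linarith) (norm_nonneg _) hM.le
    have h4 : f z = Q.eval z * u ⟨z, hz⟩ := by
      exact (mul_div_cancel₀ (f z) (hQ z hz')).symm
    have h5 : P.eval z - f z = (P.eval z - G z) + Q.eval z * (Complex.exp q - Complex.exp a)
        + Q.eval z * (Complex.exp a - u ⟨z, hz⟩) := by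
      rw [h4, hG]; ring
    have h6 : ‖Q.eval z * (Complex.exp q - Complex.exp a)‖ ≤ ε / 4 := by
      rw [norm_mul]
      exact (mul_le_mul (hQB z hz') h3 (norm_nonneg _) hB.le).trans hρ2
    have h7 : ‖Q.eval z * (Complex.exp a - u ⟨z, hz⟩)‖ ≤ ε / 4 := by
      rw [norm_mul]
      refine (mul_le_mul (hQB z hz') (hφ ⟨z, hz⟩).le (norm_nonneg _) hB.le).trans (le_of_eq ?_)
      field_simp
    rw [h5]
    refine (norm_add₃_le).trans_lt ?_
    linarith

/-! ### Zero-free polynomials near `g` in `H²` -/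

theorem h2_summable (g : H2) : Summable fun k => ‖g k‖ ^ 2 := by
  have := (lp.memℓp g).summable (by norm_num)
  simpa using this

/-- A zero-free `g` is approximated in `H²` by polynomials without zeros on the closed disc. The
dilation `z ↦ g (r z)` with `r < 1` close to `1` is `H²`-close to `g` and bounded away from zero on the
closed disc, where its Taylor polynomials converge to it uniformly. -/
theorem exists_zeroFree_near_h2 (g : H2) (hg : ∀ z ∈ ball (0 : ℂ) 1, h2Val g z ≠ 0)
    {ε : ℝ} (hε : 0 < ε) :
    ∃ Q : ℂ[X], (∀ z ∈ closedBall (0 : ℂ) 1, Q.eval z ≠ 0) ∧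
      ∑' k, ‖Q.coeff k - g k‖ ^ 2 < ε := by
  have hsum := h2_summable g
  have hbd : ∀ r ∈ Set.Icc (0 : ℝ) 1, ∀ k, ‖(r : ℂ) ^ k * g k - g k‖ ≤ ‖g k‖ := by
    intro r hr k
    have h1 : (r : ℂ) ^ k * g k - g k = ((r ^ k - 1 : ℝ) : ℂ) * g k := by push_cast; ring
    rw [h1, norm_mul, Complex.norm_real, Real.norm_eq_abs]
    refine mul_le_of_le_one_left (norm_nonneg _) ?_
    have := pow_le_one₀ hr.1 hr.2 (n := k)
    have := pow_nonneg hr.1 k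
    rw [abs_le]; constructor <;> linarith
  obtain ⟨r, hr0, hr1, hrs⟩ : ∃ r : ℝ, 0 < r ∧ r < 1 ∧
      ∑' k, ‖(r : ℂ) ^ k * g k - g k‖ ^ 2 < ε := by
    have ht : Tendsto (fun r : ℝ => ∑' k, ‖(r : ℂ) ^ k * g k - g k‖ ^ 2)
        (nhdsWithin 1 (Set.Iio 1)) (nhds (∑' k : ℕ, (0 : ℝ))) := by
      refine tendsto_tsum_of_dominated_convergence hsum (fun k => ?_) ?_
      · have hc : Continuous fun r : ℝ => ‖(r : ℂ) ^ k * g k - g k‖ ^ 2 := by fun_prop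
        have := hc.tendsto 1
        simp only [Complex.ofReal_one, one_pow, one_mul, sub_self, norm_zero] at this
        simpa using this.mono_left nhdsWithin_le_nhds
      · have h0 : ∀ᶠ r : ℝ in nhdsWithin 1 (Set.Iio 1), 0 < r :=
          nhdsWithin_le_nhds (Ioi_mem_nhds one_pos)
        filter_upwards [h0, self_mem_nhdsWithin] with r h0 h1 k
        rw [Real.norm_of_nonneg (by positivity)]
        gcongr
        exact hbd r ⟨h0.le, le_of_lt h1⟩ k
    rw [tsum_zero] at ht
    have h0 : ∀ᶠ r : ℝ in nhdsWithin 1 (Set.Iio 1), 0 < r :=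
      nhdsWithin_le_nhds (Ioi_mem_nhds one_pos)
    obtain ⟨r, ⟨h1, h2⟩, h3⟩ :=
      ((h0.and self_mem_nhdsWithin).and (ht.eventually (gt_mem_nhds hε))).exists
    exact ⟨r, h1, h2, h3⟩
  -- The Taylor polynomials of the dilation.
  let Qn : ℕ → ℂ[X] := fun n => ∑ k ∈ Finset.range n, Polynomial.C ((r : ℂ) ^ k * g k) * X ^ k
  have hcoeff : ∀ n k, (Qn n).coeff k = if k < n then (r : ℂ) ^ k * g k else 0 := by
    intro n k
    simp only [Qn, Polynomial.finsetSum_coeff, Polynomial.coeff_C_mul_X_pow]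
    simp
  have ht1 : Tendsto (fun n => ∑' k, ‖(Qn n).coeff k - g k‖ ^ 2) atTop
      (nhds (∑' k, ‖(r : ℂ) ^ k * g k - g k‖ ^ 2)) := by
    refine tendsto_tsum_of_dominated_convergence hsum (fun k => ?_) (.of_forall fun n k => ?_)
    · refine tendsto_const_nhds.congr' ?_
      filter_upwards [eventually_gt_atTop k] with n hn
      rw [hcoeff, if_pos hn]
    · rw [Real.norm_of_nonneg (by positivity), hcoeff]
      gcongr
      split_ifs
      · exact hbd r ⟨hr0.le, hr1.le⟩ k
      · simp
  have ht2 : TendstoUniformlyOn (fun n z => (Qn n).eval z) (fun z => h2Val g (r * z)) atTop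
      (closedBall 0 1) := by
    have hs : Summable fun k => ‖g‖ * r ^ k :=
      (summable_geometric_of_lt_one hr0.le hr1).mul_left _
    have := tendstoUniformlyOn_tsum_nat (f := fun k z => g k * ((r : ℂ) * z) ^ k)
      (s := closedBall (0 : ℂ) 1) hs fun k z hz => by
        have hz1 : ‖z‖ ≤ 1 := by simpa using hz
        rw [norm_mul, norm_pow, norm_mul, Complex.norm_real, Real.norm_of_nonneg hr0.le]
        gcongr
        · exact lp.norm_apply_le_norm (by norm_num) g k
        · exact mul_le_of_le_one_right hr0.le hz1
    refine this.congr (.of_forall fun n z _ => ?_)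
    simp only [Qn, Polynomial.eval_finsetSum]
    refine Finset.sum_congr rfl fun k _ => ?_
    simp only [Polynomial.eval_mul, Polynomial.eval_C, Polynomial.eval_pow, Polynomial.eval_X]
    ring
  have hcont : ContinuousOn (fun z => h2Val g (r * z)) (closedBall 0 1) :=
    ht2.continuousOn (Frequently.of_forall fun n => by fun_prop)
  obtain ⟨c, hc, hlow⟩ := exists_pos_lower_bound (isCompact_closedBall 0 1) hcont fun z hz => hg _ (by
    have hz1 : ‖z‖ ≤ 1 := by simpa using hz
    rw [mem_ball_zero_iff, norm_mul, Complex.norm_real, Real.norm_of_nonneg hr0.le]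
    exact (mul_le_of_le_one_right hr0.le hz1).trans_lt hr1)
  obtain ⟨n, hn1, hn2⟩ :=
    ((Metric.tendstoUniformlyOn_iff.1 ht2 c hc).and (ht1.eventually (gt_mem_nhds hrs))).exists
  refine ⟨Qn n, fun z hz h => ?_, hn2⟩
  have := hn1 z hz
  rw [h, dist_zero_right] at this
  linarith [hlow z hz]

theorem h2Dist_sq_le (P Q : ℂ[X]) (g : H2) :
    ∑' k, ‖P.coeff k - g k‖ ^ 2 ≤
      2 * ∑' k, ‖P.coeff k - Q.coeff k‖ ^ 2 + 2 * ∑' k, ‖Q.coeff k - g k‖ ^ 2 := by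
  have hsq : ∀ a b : ℂ, ‖a + b‖ ^ 2 ≤ 2 * ‖a‖ ^ 2 + 2 * ‖b‖ ^ 2 := fun a b => by
    have h1 : ‖a + b‖ ^ 2 ≤ (‖a‖ + ‖b‖) ^ 2 := by gcongr; exact norm_add_le a b
    nlinarith [sq_nonneg (‖a‖ - ‖b‖)]
  have hfin : ∀ p : ℂ[X], Summable fun k => ‖p.coeff k‖ ^ 2 := fun p =>
    summable_of_ne_finset_zero (s := p.support) fun k hk => by
      simp [Polynomial.notMem_support_iff.1 hk]
  have h1 : Summable fun k => ‖P.coeff k - Q.coeff k‖ ^ 2 := by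
    simpa using hfin (P - Q)
  have hsum : ∀ p : ℂ[X], Summable fun k => ‖p.coeff k - g k‖ ^ 2 := fun p =>
    Summable.of_nonneg_of_le (fun _ => by positivity)
      (fun k => by simpa [sub_eq_add_neg] using hsq (p.coeff k) (-g k))
      (((hfin p).mul_left 2).add ((h2_summable g).mul_left 2))
  rw [← tsum_mul_left, ← tsum_mul_left, ← (h1.mul_left 2).tsum_add ((hsum Q).mul_left 2)]
  refine (hsum P).tsum_le_tsum (fun k => ?_) ((h1.mul_left 2).add ((hsum Q).mul_left 2))
  simpa using hsq (P.coeff k - Q.coeff k) (Q.coeff k - g k)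

/-! ### Simultaneous approximation -/

/-- Simultaneous zero-free approximation in `H² × C(E)`: for closed
`E ⊆ 𝕋` of measure zero, `g ∈ H²` non-vanishing on `𝔻` and `f ∈ C(E)` non-vanishing
on `E`, there are polynomials `Pₙ` with no zeros in the closed disc such that `Pₙ → g`
in `H²` and `Pₙ → f` uniformly on `E`. -/
theorem simultaneous_zeroFree_approximation (E : Set ℂ) (hE : E ⊆ sphere (0 : ℂ) 1)
    (hEclosed : IsClosed E) (hEnull : circleNull E)
    (g : H2) (hg : ∀ z ∈ ball (0 : ℂ) 1, h2Val g z ≠ 0)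
    (f : ℂ → ℂ) (hfc : ContinuousOn f E) (hf0 : ∀ z ∈ E, f z ≠ 0) :
    ∃ P : ℕ → Polynomial ℂ,
      (∀ n, ∀ z ∈ closedBall (0 : ℂ) 1, (P n).eval z ≠ 0) ∧
      Tendsto (fun n => h2DistPoly (P n) g) atTop (nhds 0) ∧
      TendstoUniformlyOn (fun n z => (P n).eval z) f atTop E := by
  have key : ∀ n : ℕ, ∃ P : ℂ[X], (∀ z ∈ closedBall (0 : ℂ) 1, P.eval z ≠ 0) ∧
      ∑' k, ‖P.coeff k - g k‖ ^ 2 ≤ 4 * (1 / ((n : ℝ) + 1)) ∧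
      ∀ z ∈ E, ‖P.eval z - f z‖ < 1 / ((n : ℝ) + 1) := by
    intro n
    obtain ⟨Q, hQ, hQg⟩ := exists_zeroFree_near_h2 g hg (ε := 1 / ((n : ℝ) + 1)) (by positivity)
    obtain ⟨P, hP, hPQ, hPf⟩ :=
      exists_zeroFree_near_polynomial hE hEclosed hEnull hfc hf0 hQ
        (ε := 1 / ((n : ℝ) + 1)) (by positivity)
    exact ⟨P, hP, (h2Dist_sq_le P Q g).trans (by linarith), hPf⟩
  choose P hP hPg hPf using key
  have hlim : Tendsto (fun n : ℕ => 1 / ((n : ℝ) + 1)) atTop (nhds 0) :=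
    tendsto_one_div_add_atTop_nhds_zero_nat
  refine ⟨P, hP, ?_, ?_⟩
  · have h1 : Tendsto (fun n => ∑' k, ‖(P n).coeff k - g k‖ ^ 2) atTop (nhds 0) :=
      squeeze_zero (fun n => tsum_nonneg fun k => by positivity) hPg
        (by simpa using hlim.const_mul 4)
    simpa [h2DistPoly] using h1.sqrt
  · rw [Metric.tendstoUniformlyOn_iff]
    intro ε hε
    filter_upwards [hlim.eventually (gt_mem_nhds hε)] with n hn z hz
    rw [dist_comm, dist_eq_norm]
    exact (hPf n z hz).trans hn

end
end
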